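/- arXiv:math/0406317 — 3 statements merged into one kernel-verified Lean document; each statement's English description precedes it below -/
import Mathlib

section
/- Assume q is not a root of unity (t½ arbitrary nonzero). If Rad ≠ {0}, then for every C > 0 there exists a primary integer m > C such that the polynomial E_m exists and E_m ∈ Rad (equivalently, ev(E_m) = 0). -/
noncomputable section

/-- `V = ℂ[X, X⁻¹]`, the space of complex Laurent polynomials. -/
abbrev V : Type := LaurentPolynomial ℂ

/-- The monomial `X ^ m`. -/
def Xm (m : ℤ) : V := LaurentPolynomial.T m

/-- The radical of the duality pairing. -/
def Rad (pair : V →ₗ[ℂ] V →ₗ[ℂ] ℂ) : Submodule ℂ V := LinearMap.ker pair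

/-- `sgn m = 1` if `m > 0` and `−1` if `m ≤ 0`. -/
def sgn (m : ℤ) : ℤ := if 0 < m then 1 else -1

/-- The `Y`-eigenvalue `μ_m = q½^(−m) · t½^(−sgn m)`. -/
def mu (q2 t2 : ℂ) (m : ℤ) : ℂ := q2 ^ (-m) * t2 ^ (-sgn m)

/-- `Prec m c` is the relation `m ≻ c`: `|m| > |c|`, or `m > 0` and `c = −m`. -/
def Prec (m c : ℤ) : Prop := |c| < |m| ∨ (0 < m ∧ c = -m)

/-- `f` has the form `X^m + Σ_{c : m ≻ c} a_c · X^c`. -/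
def HasForm (m : ℤ) (f : V) : Prop :=
  ∃ a : ℤ →₀ ℂ, (∀ c ∈ a.support, Prec m c) ∧ f = Xm m + a.sum fun c ac => ac • Xm c

/-- `f` is a nonsymmetric Macdonald polynomial `E_m`: it has the form
`X^m + (lower terms)` and is a `Y`-eigenvector with eigenvalue `μ_m`. -/
def IsE (q2 t2 : ℂ) (Y : V →ₗ[ℂ] V) (m : ℤ) (f : V) : Prop :=
  HasForm m f ∧ Y f = mu q2 t2 m • f

/-- `m` is primary: `μ_a ≠ μ_m` for every integer `a` with `a ≻ m`. -/
def Primary (q2 t2 : ℂ) (m : ℤ) : Prop :=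
  ∀ a : ℤ, Prec a m → mu q2 t2 a ≠ mu q2 t2 m

theorem Xm_mul (a b : ℤ) : Xm a * Xm b = Xm (a + b) := (LaurentPolynomial.T_add a b).symm

theorem Xm_zero : Xm 0 = 1 := LaurentPolynomial.T_zero

theorem Xm_mul_assoc (a b : ℤ) (f : V) : Xm a * (Xm b * f) = Xm (a + b) * f := by
  rw [← mul_assoc, Xm_mul]

/-- Induction principle on linear predicates. -/
theorem V_ind (P : V → Prop) (h : ∀ m, P (Xm m)) (hadd : ∀ f g, P f → P g → P (f + g))
    (hsmul : ∀ (a : ℂ) f, P f → P (a • f)) (f : V) : P f := by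
  induction f using LaurentPolynomial.induction_on' with
  | add p q hp hq => exact hadd _ _ hp hq
  | C_mul_T n a =>
    rw [← LaurentPolynomial.smul_eq_C_mul]
    exact hsmul a _ (h n)

theorem V_ext {W : Type*} [AddCommMonoid W] [Module ℂ W] (A B : V →ₗ[ℂ] W)
    (h : ∀ m, A (Xm m) = B (Xm m)) (f : V) : A f = B f := by
  induction f using V_ind with
  | h m => exact h m
  | hadd f g hf hg => rw [map_add, map_add, hf, hg]
  | hsmul a f hf => rw [map_smul, map_smul, hf]

theorem V_ind2 (P : V → Prop) (h1 : P 1) (hX : ∀ f, P f → P (Xm 1 * f))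
    (hX' : ∀ f, P f → P (Xm (-1) * f)) (hadd : ∀ f g, P f → P g → P (f + g))
    (hsmul : ∀ (a : ℂ) f, P f → P (a • f)) (f : V) : P f := by
  refine V_ind P (fun m => ?_) hadd hsmul f
  induction m using Int.induction_on with
  | zero => rw [Xm_zero]; exact h1
  | succ n ih =>
    have := hX _ ih
    rwa [Xm_mul, add_comm] at this
  | pred n ih =>
    have := hX' _ ih
    rwa [Xm_mul, neg_add_eq_sub] at this

theorem cancel (f g : V) (h : (Xm 2 - 1) * f = (Xm 2 - 1) * g) : f = g := by
  refine mul_left_cancel₀ ?_ h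
  intro h0
  have h1 : (LaurentPolynomial.T 2 : V) = LaurentPolynomial.T 0 := by
    rw [LaurentPolynomial.T_zero]; exact sub_eq_zero.1 h0
  have := congrArg (fun f : V => f.coeff 0) h1
  simp [LaurentPolynomial.T_apply, -LaurentPolynomial.T_zero] at this

/-- Span of the monomials of absolute degree less than `n`. -/
def Wl (n : ℤ) : Submodule ℂ V := Submodule.span ℂ {f | ∃ c : ℤ, |c| < n ∧ f = Xm c}

theorem Xm_mem_Wl {n c : ℤ} (h : |c| < n) : Xm c ∈ Wl n := Submodule.subset_span ⟨c, h, rfl⟩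

theorem Wl_map (A : V →ₗ[ℂ] V) (n : ℤ) (Q : Submodule ℂ V) (h : ∀ c : ℤ, |c| < n → A (Xm c) ∈ Q)
    (f : V) (hf : f ∈ Wl n) : A f ∈ Q := by
  have : Wl n ≤ Q.comap A := by
    refine Submodule.span_le.2 ?_
    rintro _ ⟨c, hc, rfl⟩
    exact h c hc
  exact this hf

theorem Wl_mono {m n : ℤ} (h : m ≤ n) : Wl m ≤ Wl n := fun f hf =>
  Wl_map LinearMap.id m _ (fun _ hc => Xm_mem_Wl (lt_of_lt_of_le hc h)) f hf

theorem exists_Wl (f : V) : ∃ n : ℕ, f ∈ Wl n := by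
  induction f using V_ind with
  | h m => exact ⟨m.natAbs + 1, Xm_mem_Wl (by push_cast; simp)⟩
  | hadd f g hf hg =>
    obtain ⟨a, ha⟩ := hf
    obtain ⟨b, hb⟩ := hg
    exact ⟨a + b, add_mem (Wl_mono (by push_cast; omega) ha) (Wl_mono (by push_cast; omega) hb)⟩
  | hsmul a f hf =>
    obtain ⟨b, hb⟩ := hf
    exact ⟨b, Submodule.smul_mem _ _ hb⟩

/-- Coefficient functional. -/
theorem exists_coef : ∃ φ : ℤ → V →ₗ[ℂ] ℂ, (∀ m n : ℤ, φ m (Xm n) = if n = m then 1 else 0) :=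
  ⟨fun m => Finsupp.lapply m ∘ₗ (AddMonoidAlgebra.coeffLinearEquiv ℂ).toLinearMap,
    fun m n => LaurentPolynomial.T_apply m n⟩

theorem Wl_split (n : ℕ) (f : V) (hf : f ∈ Wl (n + 1)) :
    ∃ a b : ℂ, ∃ r ∈ Wl n, (n = 0 → b = 0) ∧ f = a • Xm n + b • Xm (-n) + r := by
  induction hf using Submodule.span_induction with
  | mem x hx =>
    obtain ⟨c, hc, rfl⟩ := hx
    by_cases h : |c| < n
    · exact ⟨0, 0, Xm c, Xm_mem_Wl h, by simp, by simp⟩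
    · by_cases h2 : c = n
      · exact ⟨1, 0, 0, zero_mem _, by simp, by simp [h2]⟩
      · have h3 : c = -n := by
          rcases abs_cases c with h | h <;> omega
        exact ⟨0, 1, 0, zero_mem _, fun h0 => by omega, by simp [h3]⟩
  | zero => exact ⟨0, 0, 0, zero_mem _, by simp, by simp⟩
  | add x y hx hy h1 h2 =>
    obtain ⟨a, b, r, hr, h0, rfl⟩ := h1
    obtain ⟨a', b', r', hr', h0', rfl⟩ := h2
    exact ⟨a + a', b + b', r + r', add_mem hr hr', fun h => by simp [h0 h, h0' h], by module⟩
  | smul k x hx h =>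
    obtain ⟨a, b, r, hr, h0, rfl⟩ := h
    exact ⟨k * a, k * b, k • r, Submodule.smul_mem _ _ hr, fun h => by simp [h0 h], by module⟩

/-- The relations of the operators. -/
structure HRel (q2 t2 : ℂ) (Top Pi : V →ₗ[ℂ] V) : Prop where
  P1 : Pi 1 = 1
  T1 : Top 1 = t2 • 1
  TX : ∀ f, Top (Xm 1 * f) = Xm (-1) * (Top f - (t2 - t2⁻¹) • f)
  TX' : ∀ f, Top (Xm (-1) * f) = Xm 1 * Top f + (t2 - t2⁻¹) • (Xm (-1) * f)
  TT : ∀ f, Top (Top f) = (t2 - t2⁻¹) • Top f + f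
  PP : ∀ f, Pi (Pi f) = f
  PX : ∀ f, Pi (Xm 1 * f) = q2 • (Xm (-1) * Pi f)
  PX' : ∀ f, Pi (Xm (-1) * f) = q2⁻¹ • (Xm 1 * Pi f)

theorem mkHRel (q2 t2 : ℂ) (hq2 : q2 ≠ 0) (ht2 : t2 ≠ 0)
    (S Top Pi : V →ₗ[ℂ] V)
    (hS : ∀ m : ℤ, S (Xm m) = Xm (-m))
    (hPi : ∀ m : ℤ, Pi (Xm m) = q2 ^ m • Xm (-m))
    (hT : ∀ f : V, (Xm 2 - 1) * Top f
        = t2 • ((Xm 2 - 1) * S f) + (t2 - t2⁻¹) • (S f - f)) : HRel q2 t2 Top Pi := by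
  have SX : ∀ f, S (Xm 1 * f) = Xm (-1) * S f := by
    intro f
    refine V_ext (S ∘ₗ LinearMap.mulLeft ℂ (Xm 1)) (LinearMap.mulLeft ℂ (Xm (-1)) ∘ₗ S)
      (fun m => ?_) f
    simp [Xm_mul, hS, add_comm]
  have T1 : Top 1 = t2 • 1 := by
    apply cancel
    have S1 : S 1 = 1 := by rw [← Xm_zero, hS]; simp
    rw [hT, S1]; simp
  have TX : ∀ f, Top (Xm 1 * f) = Xm (-1) * (Top f - (t2 - t2⁻¹) • f) := by
    intro f
    apply cancel
    rw [hT, SX]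
    have h1 := hT f
    have h2 : (Xm 2 - 1) * (Xm (-1) * (Top f - (t2 - t2⁻¹) • f)) =
      Xm (-1) * ((Xm 2 - 1) * Top f) - (t2 - t2⁻¹) • ((Xm 2 * Xm (-1)) * f - Xm (-1) * f) := by
      simp only [mul_sub, sub_mul, mul_smul_comm, smul_sub, one_mul]; ring_nf
    rw [h2, h1, Xm_mul]
    norm_num
    simp only [mul_add, mul_sub, sub_mul, mul_smul_comm, smul_sub, one_mul, mul_left_comm (Xm (-1))]
    module
  have X11 : ∀ f, Xm 1 * (Xm (-1) * f) = f := fun f => by rw [Xm_mul_assoc]; simp [Xm_zero]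
  have X11' : ∀ f, Xm (-1) * (Xm 1 * f) = f := fun f => by rw [Xm_mul_assoc]; simp [Xm_zero]
  have TX' : ∀ f, Top (Xm (-1) * f) = Xm 1 * Top f + (t2 - t2⁻¹) • (Xm (-1) * f) := by
    intro f
    have h := TX (Xm (-1) * f)
    rw [X11] at h
    rw [h, X11]
    module
  refine ⟨by rw [← Xm_zero, hPi]; simp, T1, TX, TX', ?_, ?_, ?_, ?_⟩
  · intro f
    induction f using V_ind2 with
    | h1 =>
      rw [T1, map_smul, T1, smul_smul, smul_smul]
      have h : (t2 - t2⁻¹) * t2 = t2 * t2 - 1 := by field_simp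
      rw [h]
      module
    | hX f hf =>
      rw [TX, TX', map_sub, hf, map_smul]
      simp only [mul_add, mul_sub, mul_smul_comm]
      module
    | hX' f hf =>
      rw [TX', map_add, TX, hf, map_smul, TX']
      simp only [mul_add, mul_sub, mul_smul_comm]
      module
    | hadd f g hf hg => simp only [map_add, hf, hg]; module
    | hsmul a f hf => simp only [map_smul, hf]; module
  · intro f
    refine V_ext (Pi ∘ₗ Pi) LinearMap.id (fun m => ?_) f
    simp [hPi, smul_smul, mul_inv_cancel₀ (zpow_ne_zero m hq2)]
  · intro f
    refine V_ext (Pi ∘ₗ LinearMap.mulLeft ℂ (Xm 1)) (q2 • LinearMap.mulLeft ℂ (Xm (-1)) ∘ₗ Pi)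
      (fun m => ?_) f
    simp [Xm_mul, hPi, smul_smul, zpow_add₀ hq2, add_comm, mul_comm]
  · intro f
    refine V_ext (Pi ∘ₗ LinearMap.mulLeft ℂ (Xm (-1))) (q2⁻¹ • LinearMap.mulLeft ℂ (Xm 1) ∘ₗ Pi)
      (fun m => ?_) f
    simp [Xm_mul, hPi, smul_smul, zpow_add₀ hq2, add_comm, mul_comm]

theorem adj (q2 t2 : ℂ) (hq2 : q2 ≠ 0) (Top Pi Y Yi : V →ₗ[ℂ] V) (R : HRel q2 t2 Top Pi)
    (hY : Y = Pi ∘ₗ Top) (hYi : ∀ f, Y (Yi f) = f) (hYi' : ∀ f, Yi (Y f) = f)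
    (ev : V →ₗ[ℂ] ℂ) (hevX : ∀ f, ev (Xm 1 * f) = t2⁻¹ * ev f) (hevT : ∀ f, ev (Top f) = t2 * ev f)
    (ht2 : t2 ≠ 0) (pair : V →ₗ[ℂ] V →ₗ[ℂ] ℂ) (p1 : ∀ g, pair 1 g = ev g)
    (pX : ∀ f g, pair (Xm 1 * f) g = pair f (Yi g))
    (pX' : ∀ f g, pair (Xm (-1) * f) g = pair f (Y g)) (f g : V) :
    pair (Y f) g = pair f (Xm (-1) * g) := by
  have X11 : ∀ f, Xm 1 * (Xm (-1) * f) = f := fun f => by rw [Xm_mul_assoc]; simp [Xm_zero]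
  have X11' : ∀ f, Xm (-1) * (Xm 1 * f) = f := fun f => by rw [Xm_mul_assoc]; simp [Xm_zero]
  have Yinj : ∀ f g, Y f = Y g → f = g := fun f g h => by rw [← hYi' f, h, hYi']
  have Yd : ∀ f, Y f = Pi (Top f) := fun f => by rw [hY]; rfl
  have TYi : ∀ f, Top (Yi f) = Pi f := fun f => by
    have := hYi f
    rw [Yd] at this
    rw [← R.PP (Top (Yi f)), this]
  have TXT : ∀ f, Top (Xm 1 * Top f) = Xm (-1) * f := fun f => by
    rw [R.TX, R.TT]; congr 1; module
  have aT : ∀ f g, pair (Top f) g = pair f (Top g) := by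
    intro f
    induction f using V_ind2 with
    | h1 => intro g; rw [R.T1, map_smul, LinearMap.smul_apply, p1, p1, hevT, smul_eq_mul]
    | hX f hf =>
      intro g
      have h : Yi (Top g) = Top (Y g) - (t2 - t2⁻¹) • Y g := by
        apply Yinj
        rw [hYi, Yd, map_sub, R.TT, map_smul, Yd]
        simp [R.PP]
      rw [R.TX, pX', pX, h]
      simp [hf]
    | hX' f hf =>
      intro g
      have h : Y (Top g) = Top (Yi g) + (t2 - t2⁻¹) • Y g := by
        rw [TYi, Yd, R.TT, Yd, map_add, map_smul]; module
      rw [R.TX', pX', h]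
      simp [hf, pX, pX']
    | hadd f g hf hg => intro k; simp [hf, hg]
    | hsmul a f hf => intro k; simp [hf]
  have aP : ∀ f g, pair (Pi f) g = pair f (Xm 1 * Top g) := by
    intro f
    induction f using V_ind2 with
    | h1 =>
      intro g
      have hp : Pi 1 = 1 := by
        exact R.P1
      rw [hp, p1, p1, hevX, hevT]; field_simp
    | hX f hf =>
      intro g
      have h : Yi (Xm 1 * Top g) = q2 • (Xm 1 * Top (Y g)) := by
        apply Yinj
        rw [hYi, map_smul, Yd, TXT, R.PX', smul_smul, mul_inv_cancel₀ hq2, one_smul, Yd, R.PP]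
      rw [R.PX, map_smul, LinearMap.smul_apply, pX', hf, pX, h, map_smul]
    | hX' f hf =>
      intro g
      have h : Y (Xm 1 * Top g) = q2⁻¹ • (Xm 1 * Top (Yi g)) := by
        rw [Yd, TXT, R.PX', TYi]
      rw [R.PX', map_smul, LinearMap.smul_apply, pX, hf, pX', h, map_smul]
    | hadd f g hf hg => intro k; simp [hf, hg]
    | hsmul a f hf => intro k; simp [hf]
  rw [Yd, aP, aT, TXT]

theorem ev_T (q2 t2 : ℂ) (ht2 : t2 ≠ 0) (Top Pi : V →ₗ[ℂ] V) (R : HRel q2 t2 Top Pi)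
    (ev : V →ₗ[ℂ] ℂ) (hevX : ∀ f, ev (Xm 1 * f) = t2⁻¹ * ev f)
    (hevX' : ∀ f, ev (Xm (-1) * f) = t2 * ev f) (f : V) : ev (Top f) = t2 * ev f := by
  induction f using V_ind2 with
  | h1 => rw [R.T1, map_smul, smul_eq_mul]
  | hX f hf =>
    rw [R.TX, hevX', map_sub, map_smul, hf, hevX, smul_eq_mul]
    ring
  | hX' f hf =>
    rw [R.TX', map_add, hevX, map_smul, hevX', hf, smul_eq_mul]
    field_simp
    ring
  | hadd f g hf hg => simp only [map_add, hf, hg]; ring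
  | hsmul a f hf => simp only [map_smul, hf, smul_eq_mul]; ring

theorem Wl_X {n : ℤ} {f : V} (hf : f ∈ Wl n) (e : ℤ) (he : |e| = 1) : Xm e * f ∈ Wl (n + 1) := by
  refine Wl_map (LinearMap.mulLeft ℂ (Xm e)) n _ (fun c hc => ?_) f hf
  rw [LinearMap.mulLeft_apply, Xm_mul]
  apply Xm_mem_Wl
  have := abs_add_le e c
  omega

theorem T_pos (q2 t2 : ℂ) (Top Pi : V →ₗ[ℂ] V) (R : HRel q2 t2 Top Pi) (n : ℕ) :
    Top (Xm (n + 1)) - t2⁻¹ • Xm (-(n + 1)) ∈ Wl (n + 1) := by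
  induction n with
  | zero =>
    have h : Top (Xm 1) = t2⁻¹ • Xm (-1) := by
      have := R.TX 1
      rw [mul_one, R.T1, ← sub_smul, mul_smul_comm, mul_one] at this
      rw [this]; congr 1; ring
    simp [h]
  | succ n ih =>
    have h := R.TX (Xm (n + 1))
    have h2 := Wl_X ih (-1) (by norm_num)
    rw [Xm_mul] at h
    have e1 : (1 + ((n : ℤ) + 1)) = ((n + 1 : ℕ) : ℤ) + 1 := by push_cast; ring
    rw [e1] at h
    rw [h]
    have h3 : Xm (-1) * (Top (Xm (n + 1)) - (t2 - t2⁻¹) • Xm (n + 1)) -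
        t2⁻¹ • Xm (-(((n + 1 : ℕ) : ℤ) + 1)) = Xm (-1) * (Top (Xm (n + 1)) - t2⁻¹ • Xm (-(n + 1)))
          - (t2 - t2⁻¹) • Xm n := by
      simp only [mul_sub, mul_smul_comm, Xm_mul]
      have e2 : -(((n + 1 : ℕ) : ℤ) + 1) = -1 + -((n : ℤ) + 1) := by push_cast; ring
      have e3 : -1 + ((n : ℤ) + 1) = n := by ring
      rw [e2, e3]
      module
    rw [h3]
    refine sub_mem ?_ (Submodule.smul_mem _ _ (Xm_mem_Wl ?_))
    · exact_mod_cast h2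
    · rw [abs_of_nonneg (by positivity)]; push_cast; omega

theorem T_neg (q2 t2 : ℂ) (Top Pi : V →ₗ[ℂ] V) (R : HRel q2 t2 Top Pi) (n : ℕ) :
    Top (Xm (-(n + 1))) - t2 • Xm (n + 1) - (t2 - t2⁻¹) • Xm (-(n + 1)) ∈ Wl (n + 1) := by
  induction n with
  | zero =>
    have h : Top (Xm (-1)) = t2 • Xm 1 + (t2 - t2⁻¹) • Xm (-1) := by
      have := R.TX' 1
      rwa [mul_one, R.T1, mul_smul_comm, mul_one] at this
    simp [h]
  | succ n ih =>
    have h := R.TX' (Xm (-(n + 1)))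
    have h2 := Wl_X ih 1 (by norm_num)
    rw [Xm_mul] at h
    have e1 : (-1 + -((n : ℤ) + 1)) = -(((n + 1 : ℕ) : ℤ) + 1) := by push_cast; ring
    rw [e1] at h
    rw [h]
    have h3 : Xm 1 * Top (Xm (-(n + 1))) + (t2 - t2⁻¹) • Xm (-(((n + 1 : ℕ) : ℤ) + 1))
        - t2 • Xm (((n + 1 : ℕ) : ℤ) + 1) - (t2 - t2⁻¹) • Xm (-(((n + 1 : ℕ) : ℤ) + 1))
        = Xm 1 * (Top (Xm (-(n + 1))) - t2 • Xm (n + 1) - (t2 - t2⁻¹) • Xm (-(n + 1)))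
          + (t2 - t2⁻¹) • Xm (-n) := by
      simp only [mul_sub, mul_smul_comm, Xm_mul]
      have e2 : ((n + 1 : ℕ) : ℤ) + 1 = 1 + ((n : ℤ) + 1) := by push_cast; ring
      have e3 : 1 + -((n : ℤ) + 1) = -n := by ring
      rw [e2, e3]
      module
    rw [h3]
    refine add_mem ?_ (Submodule.smul_mem _ _ (Xm_mem_Wl ?_))
    · exact_mod_cast h2
    · rw [abs_neg, abs_of_nonneg (by positivity)]; push_cast; omega

theorem Pi_Wl (q2 : ℂ) (Pi : V →ₗ[ℂ] V) (hPi : ∀ m : ℤ, Pi (Xm m) = q2 ^ m • Xm (-m))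
    {n : ℤ} {f : V} (hf : f ∈ Wl n) : Pi f ∈ Wl n := by
  refine Wl_map Pi n _ (fun c hc => ?_) f hf
  rw [hPi]
  exact Submodule.smul_mem _ _ (Xm_mem_Wl (by rwa [abs_neg]))

theorem Y_pos (q2 t2 : ℂ) (Top Pi Y : V →ₗ[ℂ] V) (R : HRel q2 t2 Top Pi)
    (hPi : ∀ m : ℤ, Pi (Xm m) = q2 ^ m • Xm (-m)) (hY : Y = Pi ∘ₗ Top) (n : ℕ) :
    Y (Xm n) - mu q2 t2 n • Xm n ∈ Wl n := by
  rcases n with _ | n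
  · have : Y (Xm 0) = t2 • Xm 0 := by
      rw [hY, Xm_zero, LinearMap.comp_apply, R.T1, map_smul, R.P1]
    simp [this, mu, sgn]
  · have h := Pi_Wl q2 Pi hPi (T_pos q2 t2 Top Pi R n)
    rw [map_sub, map_smul, hPi, smul_smul, neg_neg] at h
    have hm : mu q2 t2 ((n + 1 : ℕ) : ℤ) = t2⁻¹ * q2 ^ (-((n : ℤ) + 1)) := by
      have : (0 : ℤ) < (n : ℤ) + 1 := by positivity
      simp only [mu, sgn]
      push_cast
      rw [if_pos this, zpow_neg_one, mul_comm]
    rw [hm, hY]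
    exact_mod_cast h

theorem Y_neg (q2 t2 : ℂ) (Top Pi Y : V →ₗ[ℂ] V) (R : HRel q2 t2 Top Pi)
    (hPi : ∀ m : ℤ, Pi (Xm m) = q2 ^ m • Xm (-m)) (hY : Y = Pi ∘ₗ Top) (n : ℕ) :
    ∃ b : ℂ, Y (Xm (-n)) - mu q2 t2 (-n) • Xm (-n) - b • Xm n ∈ Wl n := by
  rcases n with _ | n
  · have : Y (Xm 0) = t2 • Xm 0 := by
      rw [hY, Xm_zero, LinearMap.comp_apply, R.T1, map_smul, R.P1]
    exact ⟨0, by simp [this, mu, sgn]⟩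
  · have h := Pi_Wl q2 Pi hPi (T_neg q2 t2 Top Pi R n)
    rw [map_sub, map_sub, map_smul, map_smul, hPi, hPi, smul_smul, smul_smul, neg_neg] at h
    refine ⟨(t2 - t2⁻¹) * q2 ^ (-((n : ℤ) + 1)), ?_⟩
    have hm : mu q2 t2 (-((n + 1 : ℕ) : ℤ)) = t2 * q2 ^ ((n : ℤ) + 1) := by
      have : ¬ (0 : ℤ) < -((n : ℤ) + 1) := by omega
      simp only [mu, sgn]
      push_cast
      rw [if_neg this, neg_neg, neg_neg, zpow_one, mul_comm]
    rw [hm, hY]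
    exact_mod_cast h

theorem coef_Wl (φ : ℤ → V →ₗ[ℂ] ℂ) (hφ : ∀ m n : ℤ, φ m (Xm n) = if n = m then 1 else 0)
    {n c : ℤ} (hc : n ≤ |c|) {f : V} (hf : f ∈ Wl n) : φ c f = 0 := by
  have : Wl n ≤ LinearMap.ker (φ c) := by
    refine Submodule.span_le.2 ?_
    rintro _ ⟨d, hd, rfl⟩
    have : d ≠ c := by rintro rfl; omega
    simp [hφ, this]
  exact this hf

/-- An eigenvector with simple eigenvalue and no leading term vanishes. -/
theorem uniq (q2 t2 : ℂ) (Y : V →ₗ[ℂ] V)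
    (Yp : ∀ n : ℕ, Y (Xm n) - mu q2 t2 n • Xm n ∈ Wl n)
    (Yn : ∀ n : ℕ, ∃ b : ℂ, Y (Xm (-n)) - mu q2 t2 (-n) • Xm (-n) - b • Xm n ∈ Wl n)
    (hW : ∀ n : ℕ, ∀ f ∈ Wl n, Y f ∈ Wl n)
    (φ : ℤ → V →ₗ[ℂ] ℂ) (hφ : ∀ m n : ℤ, φ m (Xm n) = if n = m then 1 else 0)
    (m : ℤ) (good : ∀ a, a ≠ m → mu q2 t2 a ≠ mu q2 t2 m) (N : ℕ) (d : V) (hd : d ∈ Wl N)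
    (h0 : φ m d = 0) (he : Y d = mu q2 t2 m • d) : d = 0 := by
  induction N with
  | zero =>
    have : Wl ((0 : ℕ) : ℤ) ≤ ⊥ := by
      refine Submodule.span_le.2 ?_
      rintro _ ⟨c, hc, rfl⟩
      have := abs_nonneg c
      push_cast at hc
      omega
    exact this hd
  | succ n ih =>
    apply ih
    push_cast at hd
    obtain ⟨a, b, r, hr, hb0, rfl⟩ := Wl_split n d hd
    have hYp := Yp n
    obtain ⟨k, hYn⟩ := Yn n
    set u := Y (Xm n) - mu q2 t2 n • Xm n with hu
    set v := Y (Xm (-n)) - mu q2 t2 (-n) • Xm (-n) - k • Xm n with hv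
    have e1 : Y (Xm n) = mu q2 t2 n • Xm n + u := by rw [hu]; module
    have e2 : Y (Xm (-n)) = mu q2 t2 (-n) • Xm (-n) + k • Xm n + v := by rw [hv]; module
    have an : (n : ℤ) ≤ |(n : ℤ)| := le_abs_self _
    have an' : (n : ℤ) ≤ |(-n : ℤ)| := by rw [abs_neg]; exact an
    simp only [map_add, map_smul, e1, e2] at he
    have hYr := hW n r hr
    have hb : b = 0 := by
      by_cases hn : n = 0
      · exact hb0 hn
      have hne : (n : ℤ) ≠ -n := by omega
      have h1 := congrArg (φ (-n)) he
      simp only [map_add, map_smul, hφ, coef_Wl φ hφ an' hYp, coef_Wl φ hφ an' hYn,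
        coef_Wl φ hφ an' hr, coef_Wl φ hφ an' hYr, smul_eq_mul, if_neg hne] at h1
      simp at h1
      by_cases hm : (-n : ℤ) = m
      · rw [← hm] at h0
        simpa [map_add, map_smul, hφ, coef_Wl φ hφ an' hr, hn] using h0
      · have := good _ hm
        by_contra hb
        apply this
        have h2 : b * (mu q2 t2 (-n) - mu q2 t2 m) = 0 := by linear_combination h1
        rcases mul_eq_zero.1 h2 with h | h
        · exact absurd h hb
        · exact sub_eq_zero.1 h
    subst hb
    have ha : a = 0 := by
      have h1 := congrArg (φ n) he
      simp only [map_add, map_smul, hφ, coef_Wl φ hφ an hYp,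
        coef_Wl φ hφ an hr, coef_Wl φ hφ an hYr, smul_eq_mul, zero_mul] at h1
      simp at h1
      by_cases hm : (n : ℤ) = m
      · rw [← hm] at h0
        simpa [map_add, map_smul, hφ, coef_Wl φ hφ an hr] using h0
      · have := good _ hm
        by_contra hb
        apply this
        have h2 : a * (mu q2 t2 n - mu q2 t2 m) = 0 := by linear_combination h1
        rcases mul_eq_zero.1 h2 with h | h
        · exact absurd h hb
        · exact sub_eq_zero.1 h
    subst ha
    simpa using hr

theorem solve (q2 t2 : ℂ) (Y : V →ₗ[ℂ] V)
    (Yp : ∀ n : ℕ, Y (Xm n) - mu q2 t2 n • Xm n ∈ Wl n)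
    (Yn : ∀ n : ℕ, ∃ b : ℂ, Y (Xm (-n)) - mu q2 t2 (-n) • Xm (-n) - b • Xm n ∈ Wl n)
    (m : ℤ) (good : ∀ a, a ≠ m → mu q2 t2 a ≠ mu q2 t2 m) (N : ℕ) (hN : N ≤ m) :
    Wl N ≤ (Wl N).map (Y - mu q2 t2 m • LinearMap.id) := by
  induction N with
  | zero =>
    refine Submodule.span_le.2 ?_
    rintro _ ⟨c, hc, rfl⟩
    have := abs_nonneg c
    push_cast at hc
    omega
  | succ n ih =>
    push_cast at hN ⊢
    have ih := ih (by omega)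
    set A := Y - mu q2 t2 m • LinearMap.id with hA
    have mono : Wl n ≤ Wl (n + 1) := Wl_mono (by omega)
    have sub : Wl n ≤ (Wl (n + 1)).map A := ih.trans (Submodule.map_mono mono)
    have hmem : ∀ c : ℤ, |c| < n + 1 → A (Xm c) ∈ (Wl (n + 1)).map A := fun c hc =>
      Submodule.mem_map_of_mem (Xm_mem_Wl hc)
    have an : |(n : ℤ)| = n := abs_of_nonneg (by positivity)
    have hp : Xm n ∈ (Wl (n + 1)).map A := by
      have h1 := sub_mem (hmem n (by omega)) (sub (Yp n))
      have h2 : A (Xm n) - (Y (Xm n) - mu q2 t2 n • Xm n) = (mu q2 t2 n - mu q2 t2 m) • Xm n := by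
        rw [hA]; simp only [LinearMap.sub_apply, LinearMap.smul_apply, LinearMap.id_apply]; module
      rw [h2] at h1
      exact (Submodule.smul_mem_iff _ (sub_ne_zero.2 (good n (by omega)))).1 h1
    have hn : Xm (-n) ∈ (Wl (n + 1)).map A := by
      obtain ⟨b, hb⟩ := Yn n
      have h1 := sub_mem (sub_mem (hmem (-n) (by rw [abs_neg]; omega)) (sub hb))
        (Submodule.smul_mem _ b hp)
      have h2 : A (Xm (-n)) - (Y (Xm (-n)) - mu q2 t2 (-n) • Xm (-n) - b • Xm n) - b • Xm n
          = (mu q2 t2 (-n) - mu q2 t2 m) • Xm (-n) := by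
        rw [hA]; simp only [LinearMap.sub_apply, LinearMap.smul_apply, LinearMap.id_apply]; module
      rw [h2] at h1
      exact (Submodule.smul_mem_iff _ (sub_ne_zero.2 (good (-n) (by omega)))).1 h1
    intro f hf
    obtain ⟨a, b, r, hr, -, rfl⟩ := Wl_split n f hf
    exact add_mem (add_mem (Submodule.smul_mem _ _ hp) (Submodule.smul_mem _ _ hn)) (sub hr)

theorem hasForm_of (m : ℤ) (u : V) (hu : u ∈ Wl m) : HasForm m (Xm m + u) := by
  have h : Wl m = Submodule.span ℂ (Set.image Xm {c | |c| < m}) := by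
    unfold Wl
    congr 1
    ext f
    constructor
    · rintro ⟨c, hc, rfl⟩; exact ⟨c, hc, rfl⟩
    · rintro ⟨c, hc, rfl⟩; exact ⟨c, hc, rfl⟩
  rw [h, Finsupp.mem_span_image_iff_linearCombination] at hu
  obtain ⟨l, hl, rfl⟩ := hu
  refine ⟨l, fun c hc => Or.inl ?_, rfl⟩
  have h1 : |c| < m := hl hc
  exact lt_of_lt_of_le h1 (le_abs_self m)

theorem coef_form (φ : ℤ → V →ₗ[ℂ] ℂ) (hφ : ∀ m n : ℤ, φ m (Xm n) = if n = m then 1 else 0)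
    (m : ℤ) (f : V) (hf : HasForm m f) : φ m f = 1 := by
  obtain ⟨a, ha, rfl⟩ := hf
  rw [map_add, hφ, if_pos rfl, map_finsuppSum]
  simp only [Finsupp.sum]
  rw [Finset.sum_eq_zero, add_zero]
  intro c hc
  have : c ≠ m := by
    rintro rfl
    rcases ha c hc with h | ⟨h1, h2⟩
    · exact lt_irrefl _ h
    · omega
  rw [map_smul, hφ, if_neg this, smul_zero]

theorem Y_Wl (q2 t2 : ℂ) (Y : V →ₗ[ℂ] V)
    (Yp : ∀ n : ℕ, Y (Xm n) - mu q2 t2 n • Xm n ∈ Wl n)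
    (Yn : ∀ n : ℕ, ∃ b : ℂ, Y (Xm (-n)) - mu q2 t2 (-n) • Xm (-n) - b • Xm n ∈ Wl n)
    (n : ℕ) (f : V) (hf : f ∈ Wl n) : Y f ∈ Wl n := by
  refine Wl_map Y n _ (fun c hc => ?_) f hf
  obtain ⟨k, rfl | rfl⟩ := c.eq_nat_or_neg
  · have h : |(k : ℤ)| = k := abs_of_nonneg (by positivity)
    have h1 := add_mem (Wl_mono (by omega) (Yp k)) (Submodule.smul_mem _ (mu q2 t2 k) (Xm_mem_Wl hc))
    rwa [sub_add_cancel] at h1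
  · have h : |(k : ℤ)| = k := abs_of_nonneg (by positivity)
    rw [abs_neg] at hc
    obtain ⟨b, hb⟩ := Yn k
    have h1 := add_mem (add_mem (Wl_mono (n := n) (by omega) hb)
      (Submodule.smul_mem _ b (Xm_mem_Wl hc)))
      (Submodule.smul_mem _ (mu q2 t2 (-k)) (Xm_mem_Wl (c := -k) (by rwa [abs_neg])))
    rwa [sub_add_cancel, sub_add_cancel] at h1

theorem q_inj (q2 : ℂ) (hq2 : q2 ≠ 0) (hqnr : ∀ n : ℕ, 0 < n → (q2 ^ 2) ^ n ≠ 1) (a b : ℤ)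
    (h : q2 ^ a = q2 ^ b) : a = b := by
  by_contra hne
  have h1 : q2 ^ (a - b) = 1 := by
    rw [zpow_sub₀ hq2, h, div_self (zpow_ne_zero _ hq2)]
  apply hqnr (a - b).natAbs (by omega)
  rw [← pow_mul, mul_comm, pow_mul]
  have h2 : q2 ^ (a - b).natAbs = 1 := by
    rcases Int.natAbs_eq (a - b) with h | h
    · rw [h, zpow_natCast] at h1; exact h1
    · rw [h, zpow_neg, zpow_natCast, inv_eq_one] at h1; exact h1
  rw [h2, one_pow]

theorem exists_K (q2 t2 : ℂ) (hq2 : q2 ≠ 0) (ht2 : t2 ≠ 0)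
    (hqnr : ∀ n : ℕ, 0 < n → (q2 ^ 2) ^ n ≠ 1) :
    ∃ K : ℤ, 0 ≤ K ∧ ∀ m, K < m → ∀ a, a ≠ m → mu q2 t2 a ≠ mu q2 t2 m := by
  have hinj := q_inj q2 hq2 hqnr
  have hK : ∃ K : ℤ, 0 ≤ K ∧ ∀ N, K < N → q2 ^ N * t2 ^ 2 ≠ 1 := by
    by_cases h : ∃ N : ℤ, q2 ^ N * t2 ^ 2 = 1
    · obtain ⟨N, hN⟩ := h
      refine ⟨|N|, abs_nonneg _, fun M hM h => ?_⟩
      have : M = N := hinj _ _ (mul_right_cancel₀ (pow_ne_zero 2 ht2) (h.trans hN.symm))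
      have := le_abs_self N
      omega
    · push Not at h
      exact ⟨0, le_rfl, fun N _ => h N⟩
  obtain ⟨K, hK0, hK⟩ := hK
  refine ⟨K, hK0, fun m hm a ha h => ?_⟩
  have hm0 : 0 < m := by omega
  simp only [mu, sgn, if_pos hm0] at h
  by_cases ha0 : 0 < a
  · rw [if_pos ha0] at h
    have := hinj _ _ (mul_right_cancel₀ (zpow_ne_zero _ ht2) h)
    omega
  · rw [if_neg ha0, neg_neg, zpow_one, zpow_neg_one] at h
    apply hK (m - a) (by omega)
    rw [sub_eq_add_neg, zpow_add₀ hq2]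
    calc q2 ^ m * q2 ^ (-a) * t2 ^ 2 = q2 ^ m * (q2 ^ (-a) * t2) * t2 := by ring
      _ = 1 := by
        rw [h, zpow_neg]
        have := zpow_ne_zero m hq2
        field_simp

/-- if `q` is not a root of unity and `Rad ≠ {0}`, then for every
`C > 0` there is a primary integer `m > C` such that `E_m` exists and
`E_m ∈ Rad`. -/
theorem stmt11
    (q2 t2 : ℂ) (hq2 : q2 ≠ 0) (ht2 : t2 ≠ 0)
    (S Top Pi Y : V →ₗ[ℂ] V)
    (hS : ∀ m : ℤ, S (Xm m) = Xm (-m))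
    (hPi : ∀ m : ℤ, Pi (Xm m) = q2 ^ m • Xm (-m))
    (hT : ∀ f : V, (Xm 2 - 1) * Top f
        = t2 • ((Xm 2 - 1) * S f) + (t2 - t2⁻¹) • (S f - f))
    (hY : Y = Pi ∘ₗ Top)
    (ev : V →ₗ[ℂ] ℂ) (hev : ∀ m : ℤ, ev (Xm m) = t2 ^ (-m))
    (Yz : ℤ → V →ₗ[ℂ] V)
    (hYz0 : Yz 0 = LinearMap.id) (hYz1 : Yz 1 = Y)
    (hYzadd : ∀ a b : ℤ, Yz (a + b) = Yz a ∘ₗ Yz b)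
    (pair : V →ₗ[ℂ] V →ₗ[ℂ] ℂ)
    (hpair : ∀ (m : ℤ) (g : V), pair (Xm m) g = ev (Yz (-m) g))
    (hqnr : ∀ n : ℕ, 0 < n → (q2 ^ 2) ^ n ≠ 1) :
    Rad pair ≠ ⊥ →
    ∀ C : ℤ, 0 < C →
      ∃ m : ℤ, C < m ∧ Primary q2 t2 m ∧
        (∃! f : V, IsE q2 t2 Y m f) ∧
        ∀ f : V, IsE q2 t2 Y m f → f ∈ Rad pair := by
  have R := mkHRel q2 t2 hq2 ht2 S Top Pi hS hPi hT
  have Yp := Y_pos q2 t2 Top Pi Y R hPi hY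
  have Yn := Y_neg q2 t2 Top Pi Y R hPi hY
  have hW := Y_Wl q2 t2 Y Yp Yn
  obtain ⟨φ, hφ⟩ := exists_coef
  obtain ⟨K, hK0, hK⟩ := exists_K q2 t2 hq2 ht2 hqnr
  have hYi : ∀ f, Y (Yz (-1) f) = f := fun f => by
    have := hYzadd 1 (-1)
    rw [show (1 : ℤ) + -1 = 0 by norm_num, hYz0, hYz1] at this
    exact (LinearMap.congr_fun this f).symm
  have hYi' : ∀ f, Yz (-1) (Y f) = f := fun f => by
    have := hYzadd (-1) 1
    rw [show (-1 : ℤ) + 1 = 0 by norm_num, hYz0, hYz1] at this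
    exact (LinearMap.congr_fun this f).symm
  have hevX : ∀ f, ev (Xm 1 * f) = t2⁻¹ * ev f := fun f => by
    refine V_ext (ev ∘ₗ LinearMap.mulLeft ℂ (Xm 1)) (t2⁻¹ • ev) (fun m => ?_) f
    simp [Xm_mul, hev, zpow_add₀ ht2, mul_comm]
  have hevX' : ∀ f, ev (Xm (-1) * f) = t2 * ev f := fun f => by
    refine V_ext (ev ∘ₗ LinearMap.mulLeft ℂ (Xm (-1))) (t2 • ev) (fun m => ?_) f
    simp [Xm_mul, hev, zpow_add₀ ht2, mul_comm]
  have hevT := ev_T q2 t2 ht2 Top Pi R ev hevX hevX'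
  have p1 : ∀ g, pair 1 g = ev g := fun g => by
    rw [← Xm_zero, hpair, neg_zero, hYz0]; rfl
  have pX : ∀ f g, pair (Xm 1 * f) g = pair f (Yz (-1) g) := fun f g => by
    refine V_ext (pair.flip g ∘ₗ LinearMap.mulLeft ℂ (Xm 1)) (pair.flip (Yz (-1) g)) (fun m => ?_) f
    simp only [LinearMap.comp_apply, LinearMap.flip_apply, LinearMap.mulLeft_apply, Xm_mul, hpair]
    rw [show -(1 + m) = -m + -1 by ring, hYzadd]; rfl
  have pX' : ∀ f g, pair (Xm (-1) * f) g = pair f (Y g) := fun f g => by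
    refine V_ext (pair.flip g ∘ₗ LinearMap.mulLeft ℂ (Xm (-1))) (pair.flip (Y g)) (fun m => ?_) f
    simp only [LinearMap.comp_apply, LinearMap.flip_apply, LinearMap.mulLeft_apply, Xm_mul, hpair]
    rw [show -(-1 + m) = -m + 1 by ring, hYzadd, hYz1]; rfl
  have hadj := adj q2 t2 hq2 Top Pi Y (Yz (-1)) R hY hYi hYi' ev hevX hevT ht2 pair p1 pX pX'
  have Y1 : Y 1 = t2 • 1 := by rw [hY, LinearMap.comp_apply, R.T1, map_smul, R.P1]
  have Yi1 : Yz (-1) 1 = t2⁻¹ • 1 := by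
    have := hYi' 1
    rw [Y1, map_smul] at this
    rw [← this, smul_smul, inv_mul_cancel₀ ht2, one_smul, this]
  have pr1 : ∀ f, pair f 1 = ev f := by
    intro f
    induction f using V_ind2 with
    | h1 => exact p1 1
    | hX f hf => rw [pX, Yi1, map_smul, hf, hevX, smul_eq_mul]
    | hX' f hf => rw [pX', Y1, map_smul, hf, hevX', smul_eq_mul]
    | hadd f g hf hg => simp [hf, hg]
    | hsmul a f hf => simp [hf]
  have mu0 : ∀ m, mu q2 t2 m ≠ 0 := fun m =>
    mul_ne_zero (zpow_ne_zero _ hq2) (zpow_ne_zero _ ht2)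
  intro hRad C hC
  obtain ⟨f, hf, hf0⟩ := (Submodule.ne_bot_iff _).1 hRad
  have hf' : ∀ g, pair f g = 0 := fun g => by
    have : pair f = 0 := hf
    rw [this]; rfl
  obtain ⟨n, p, hp⟩ := LaurentPolynomial.exists_T_pow f
  have hpz : ∀ (n : ℕ) g, pair (f * LaurentPolynomial.T n) g = 0 := by
    intro n
    induction n with
    | zero => intro g; simpa using hf' g
    | succ n ih =>
      intro g
      have : f * LaurentPolynomial.T ((n + 1 : ℕ) : ℤ) = Xm 1 * (f * LaurentPolynomial.T n) := by
        push_cast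
        rw [LaurentPolynomial.T_add, Xm]
        ring
      rw [this, pX, ih]
  have hp0 : p ≠ 0 := by
    rintro rfl
    rw [map_zero] at hp
    have h1 := congrArg (fun g => g * LaurentPolynomial.T (-(n : ℤ))) hp
    simp only [zero_mul, mul_assoc, ← LaurentPolynomial.T_add, add_neg_cancel,
      LaurentPolynomial.T_zero, mul_one] at h1
    exact hf0 h1.symm
  have hroot : Set.Finite {m : ℤ | 0 < m ∧ p.IsRoot (mu q2 t2 m)⁻¹} := by
    refine Set.Finite.of_finite_image (f := fun m => (mu q2 t2 m)⁻¹)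
      ((Polynomial.finite_setOfPred_isRoot hp0).subset ?_) ?_
    · rintro _ ⟨m, hm, rfl⟩
      exact hm.2
    · rintro a ⟨ha, -⟩ b ⟨hb, -⟩ hab
      have h := inv_injective hab
      simp only [mu, sgn, if_pos ha, if_pos hb] at h
      have := q_inj q2 hq2 hqnr _ _ (mul_right_cancel₀ (zpow_ne_zero _ ht2) h)
      omega
  obtain ⟨m, hm, hmr⟩ := ((Set.Ioi_infinite (max C K)).sdiff hroot).nonempty
  have hmC : C < m := lt_of_le_of_lt (le_max_left _ _) hm
  have hmK : K < m := lt_of_le_of_lt (le_max_right _ _) hm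
  have hm0 : 0 < m := by omega
  have good := hK m hmK
  refine ⟨m, hmC, ?_, ?_, ?_⟩
  · intro a ha
    apply good
    rintro rfl
    rcases ha with h | ⟨h1, h2⟩
    · exact lt_irrefl _ h
    · omega
  · obtain ⟨k, rfl⟩ := Int.eq_ofNat_of_zero_le hm0.le
    have hs := solve q2 t2 Y Yp Yn k good k le_rfl (Yp k)
    obtain ⟨u, hu, hu2⟩ := hs
    refine ⟨Xm k + (-u), ⟨hasForm_of _ _ (neg_mem hu), ?_⟩, ?_⟩
    · simp only [LinearMap.sub_apply, LinearMap.smul_apply, LinearMap.id_apply] at hu2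
      rw [map_add, map_neg]
      linear_combination (norm := module) (-1 : ℂ) • hu2
    · intro g hg
      obtain ⟨N, hN⟩ := exists_Wl (g - (Xm k + -u))
      rw [← sub_eq_zero]
      refine uniq q2 t2 Y Yp Yn hW φ hφ k good N _ hN ?_ ?_
      · rw [map_sub, coef_form φ hφ k g hg.1, coef_form φ hφ k _ (hasForm_of _ _ (neg_mem hu)),
          sub_self]
      · simp only [LinearMap.sub_apply, LinearMap.smul_apply, LinearMap.id_apply] at hu2
        rw [map_sub, hg.2, map_add, map_neg]
        linear_combination (norm := module) (1 : ℂ) • hu2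
  · rintro E ⟨-, hE⟩
    have hYiE : Yz (-1) E = (mu q2 t2 m)⁻¹ • E := by
      have := hYi' E
      rw [hE, map_smul] at this
      nth_rewrite 2 [← this]
      rw [smul_smul, inv_mul_cancel₀ (mu0 m), one_smul]
    have hpe : ∀ p : Polynomial ℂ, pair (Polynomial.toLaurent p) E
        = p.eval (mu q2 t2 m)⁻¹ * ev E := by
      intro p
      induction p using Polynomial.induction_on' with
      | add p q hp hq => simp [hp, hq, add_mul]
      | monomial n a =>
        rw [Polynomial.toLaurent_C_mul_T, ← LaurentPolynomial.smul_eq_C_mul, map_smul,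
          LinearMap.smul_apply, Polynomial.eval_monomial, smul_eq_mul, mul_assoc]
        congr 1
        induction n with
        | zero => simp [p1]
        | succ n ih =>
          have : (LaurentPolynomial.T ((n + 1 : ℕ) : ℤ) : V) = Xm 1 * LaurentPolynomial.T n := by
            push_cast
            rw [LaurentPolynomial.T_add, Xm]
            ring
          rw [this, pX, hYiE, map_smul, ih, smul_eq_mul]
          ring
    have hevE : ev E = 0 := by
      have h1 := hpe p
      rw [hp, hpz] at h1
      rcases mul_eq_zero.1 h1.symm with h | h
      · exact absurd ⟨hm0, h⟩ hmr
      · exact h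
    have hz : ∀ g, pair E g = 0 := by
      intro g
      induction g using V_ind2 with
      | h1 => rw [pr1, hevE]
      | hX g hg =>
        have h1 := hadj E (Xm 1 * g)
        rw [Xm_mul_assoc, hE, map_smul, LinearMap.smul_apply] at h1
        norm_num [Xm_zero, hg] at h1
        exact h1.resolve_left (mu0 m)
      | hX' g hg => rw [← hadj, hE, map_smul, LinearMap.smul_apply, hg, smul_zero]
      | hadd f g hf hg => rw [map_add, hf, hg, add_zero]
      | hsmul a f hf => rw [map_smul, hf, smul_zero]
    exact LinearMap.ext hz
end
end

section
/- For arbitrary nonzero q½, t½: every ℂ-bilinear form B : V × V → ℂ satisfying B(T(f),g) = B(f,T(g)), B(X·f,g) = B(f,Y⁻¹(g)) and B(Y(f),g) = B(f,X⁻¹·g) for all f, g ∈ V is equal to B(1,1)·{·,·}; in particular, if in addition B(1,1) = 0 then B vanishes identically. Consequently V/Rad is the greatest quotient of V carrying a nondegenerate pairing with these invariance properties. -/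
noncomputable section

/-- every bilinear form `B` on `V` satisfying
`B(T f, g) = B(f, T g)`, `B(X·f, g) = B(f, Y⁻¹ g)` and
`B(Y f, g) = B(f, X⁻¹·g)` equals `B(1,1)·{·,·}`; in particular if moreover
`B(1,1) = 0` then `B = 0`. -/
theorem stmt12
    (q2 t2 : ℂ) (hq2 : q2 ≠ 0) (ht2 : t2 ≠ 0)
    (S Top Pi Y : V →ₗ[ℂ] V)
    (hS : ∀ m : ℤ, S (Xm m) = Xm (-m))
    (hPi : ∀ m : ℤ, Pi (Xm m) = q2 ^ m • Xm (-m))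
    (hT : ∀ f : V, (Xm 2 - 1) * Top f
        = t2 • ((Xm 2 - 1) * S f) + (t2 - t2⁻¹) • (S f - f))
    (hY : Y = Pi ∘ₗ Top)
    (ev : V →ₗ[ℂ] ℂ) (hev : ∀ m : ℤ, ev (Xm m) = t2 ^ (-m))
    (Yz : ℤ → V →ₗ[ℂ] V)
    (hYz0 : Yz 0 = LinearMap.id) (hYz1 : Yz 1 = Y)
    (hYzadd : ∀ a b : ℤ, Yz (a + b) = Yz a ∘ₗ Yz b)
    (pair : V →ₗ[ℂ] V →ₗ[ℂ] ℂ)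
    (hpair : ∀ (m : ℤ) (g : V), pair (Xm m) g = ev (Yz (-m) g))
    :
    ∀ B : V →ₗ[ℂ] V →ₗ[ℂ] ℂ,
      (∀ f g : V, B (Top f) g = B f (Top g)) →
      (∀ f g : V, B (Xm 1 * f) g = B f (Yz (-1) g)) →
      (∀ f g : V, B (Y f) g = B f (Xm (-1) * g)) →
      (∀ f g : V, B f g = B 1 1 * pair f g) ∧
      (B 1 1 = 0 → ∀ f g : V, B f g = 0) := by
  intro B _ hBX hBY
  have hX0 : Xm 0 = (1 : V) := LaurentPolynomial.T_zero
  have hXadd : ∀ a b : ℤ, Xm (a + b) = Xm a * Xm b := fun a b => LaurentPolynomial.T_add a b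
  have hYadd : ∀ (a b : ℤ) (g : V), Yz a (Yz b g) = Yz (a + b) g := by
    intro a b g
    rw [hYzadd]; rfl
  have hne : (Xm 2 - 1 : V) ≠ 0 := by
    rw [← hX0]
    intro h
    have h1 := congrArg (fun f : V => f.coeff 2) h
    simp [Xm, LaurentPolynomial.T, -LaurentPolynomial.single_eq_C_mul_T, AddMonoidAlgebra.coeff_single, Finsupp.single_apply] at h1
  have hS1 : S 1 = 1 := by
    have := hS 0
    rwa [neg_zero, hX0] at this
  have hT1 : Top 1 = t2 • (1 : V) := by
    apply mul_left_cancel₀ hne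
    rw [hT, hS1]
    simp
  have hPi1 : Pi 1 = 1 := by
    have := hPi 0
    rwa [neg_zero, hX0, zpow_zero, one_smul] at this
  have hY1 : Y 1 = t2 • (1 : V) := by
    rw [hY, LinearMap.comp_apply, hT1, map_smul, hPi1]
  have hstep : ∀ g : V, B 1 (Xm (-1) * g) = t2 * B 1 g := by
    intro g
    rw [← hBY, hY1]
    simp
  have hphi : ∀ m : ℤ, B 1 (Xm m) = B 1 1 * t2 ^ (-m) := by
    intro m
    induction m using Int.induction_on with
    | zero => simp [hX0]
    | succ n ih =>
      have h := hstep (Xm (n + 1))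
      rw [← hXadd, show (-1 + ((n : ℤ) + 1)) = n by ring, ih] at h
      apply mul_left_cancel₀ ht2
      rw [← h, show (-(n : ℤ)) = -(n + 1) + 1 by ring, zpow_add₀ ht2, zpow_one]
      ring
    | pred n ih =>
      have h := hstep (Xm (-n))
      rw [← hXadd, show (-1 + (-(n : ℤ))) = -n - 1 by ring, ih] at h
      rw [h, show (-(-(n : ℤ) - 1)) = -(-n) + 1 by ring, zpow_add₀ ht2, zpow_one]
      ring
  have hind : ∀ (P : V → Prop), (∀ m, P (Xm m)) → (∀ f g, P f → P g → P (f + g)) →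
      (∀ (c : ℂ) f, P f → P (c • f)) → ∀ f, P f := by
    intro P h1 h2 h3 f
    induction f using LaurentPolynomial.induction_on' with
    | add p q hp hq => exact h2 p q hp hq
    | C_mul_T n a =>
      rw [← LaurentPolynomial.smul_eq_C_mul]
      exact h3 a _ (h1 n)
  have hphi' : ∀ g : V, B 1 g = B 1 1 * ev g := by
    apply hind
    · intro m
      rw [hphi, hev]
    · intro f g hf hg
      rw [map_add, map_add, hf, hg]; ring
    · intro c f hf
      rw [map_smul, map_smul, hf, smul_eq_mul, smul_eq_mul]; ring
  have hmon : ∀ (m : ℤ) (g : V), B (Xm m) g = B 1 (Yz (-m) g) := by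
    intro m
    induction m using Int.induction_on with
    | zero => intro g; simp [hX0, hYz0]
    | succ n ih =>
      intro g
      rw [add_comm, hXadd, hBX, ih, hYadd]
      congr 2
      congr 1
      ring
    | pred n ih =>
      intro g
      have h := hBX (Xm (-n - 1)) (Yz 1 g)
      rw [← hXadd, show (1 + (-(n : ℤ) - 1)) = -n by ring, ih, hYadd, hYadd,
        show (-1 + 1 : ℤ) = 0 by ring, hYz0, LinearMap.id_apply] at h
      rw [← h]
      congr 2
      congr 1
      ring
  have main : ∀ f g : V, B f g = B 1 1 * pair f g := by
    intro f g
    revert f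
    apply hind
    · intro m
      rw [hmon, hphi', hpair]
    · intro f f' hf hf'
      simp only [map_add, LinearMap.add_apply, hf, hf']; ring
    · intro c f hf
      simp only [map_smul, LinearMap.smul_apply, hf, smul_eq_mul]; ring
  refine ⟨main, fun h f g => ?_⟩
  rw [main, h, zero_mul]
end
end

section
/- Let b ∈ P, let u_b be the unique element of W such that π_b = b·u_b⁻¹ satisfies λ(π_b) ∩ R = ∅, and set b₋ = u_b(b) ∈ P₋. Then λ(π_b) = {[α, ν_α·j] : α ∈ R₋, j ∈ ℤ, and either (u_b⁻¹(α) ∈ R₊ and 0 < j < ⟨b₋,α^∨⟩) or (u_b⁻¹(α) ∈ R₋ and 0 < j ≤ ⟨b₋,α^∨⟩)}. -/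
open RealInnerProductSpace

set_option linter.unusedVariables false

noncomputable section

variable {E : Type*} [NormedAddCommGroup E] [InnerProductSpace ℝ E]

/-- The pairing `⟨b, α^∨⟩ = 2⟨b,α⟩/⟨α,α⟩` with the coroot of `α`. -/
def pairCo (b α : E) : ℝ := 2 * ⟪b, α⟫ / ⟪α, α⟫

/-- The Weyl group `W`: the subgroup of linear automorphisms of `E` generated
by the reflections `s_α : β ↦ β − ⟨β,α^∨⟩·α`, `α ∈ R`. -/
def WeylGrp (R : Set E) : Subgroup (E ≃ₗ[ℝ] E) :=
  Subgroup.closure {w | ∃ α ∈ R, ∀ β : E, w β = β - pairCo β α • α}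

/-- The weight lattice `P = {b : ⟨b,α^∨⟩ ∈ ℤ for all α ∈ R}`. -/
def wtLat (R : Set E) : Set E := {b | ∀ α ∈ R, ∃ z : ℤ, pairCo b α = z}

/-- The antidominant weights `P₋ = {b ∈ P : ⟨b,α^∨⟩ ≤ 0 for all α ∈ R₊}`. -/
def wtLatNeg (R Rp : Set E) : Set E :=
  {b | b ∈ wtLat R ∧ ∀ α ∈ Rp, pairCo b α ≤ 0}

/-- The positive affine roots `R̃₊ = R₊ ∪ {[α, ν_α j] : α ∈ R, j > 0}`,
where `ν_α = ⟨α,α⟩/2` and `[α, x]` is the pair `(α, x) ∈ E × ℝ`. -/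
def AffPos (R Rp : Set E) : Set (E × ℝ) :=
  {x | (∃ α ∈ Rp, x = (α, 0)) ∨
       ∃ α ∈ R, ∃ j : ℤ, 0 < j ∧ x = (α, ⟪α, α⟫ / 2 * j)}

/-- The negative affine roots `R̃₋ = −R̃₊`. -/
def AffNeg (R Rp : Set E) : Set (E × ℝ) := {x | -x ∈ AffPos R Rp}

/-- `λ(F) = {α̃ ∈ R̃₊ : F(α̃) ∈ R̃₋}` for an affine transformation `F` of `E × ℝ`. -/
def lamSet (R Rp : Set E) (F : E × ℝ → E × ℝ) : Set (E × ℝ) :=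
  {x | x ∈ AffPos R Rp ∧ F x ∈ AffNeg R Rp}

/-- The length `l(F) = #λ(F)`. -/
def len (R Rp : Set E) (F : E × ℝ → E × ℝ) : ℕ := (lamSet R Rp F).ncard

/-- The action of the translation `b ∈ P ⊆ Ŵ` on `E × ℝ`:
`b([z,ζ]) = [z, ζ − ⟨z,b⟩]`. -/
def transl (b : E) : E × ℝ → E × ℝ := fun p => (p.1, p.2 - ⟪p.1, b⟫)

/-- The action of `w ∈ W ⊆ Ŵ` on `E × ℝ`: `w([z,ζ]) = [w(z), ζ]`. -/
def linMap (u : E ≃ₗ[ℝ] E) : E × ℝ → E × ℝ := fun p => (u p.1, p.2)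

/-- The action of the element `π = b·u⁻¹ ∈ Ŵ` on `E × ℝ`:
`(b·u⁻¹)([z,ζ]) = [u⁻¹(z), ζ − ⟨u⁻¹(z), b⟩]`. -/
def piMap (b : E) (u : E ≃ₗ[ℝ] E) : E × ℝ → E × ℝ :=
  fun p => (u.symm p.1, p.2 - ⟪u.symm p.1, b⟫)

theorem weyl_pres (R : Set E) (hR0 : (0 : E) ∉ R)
    (hRrefl : ∀ α ∈ R, ∀ β ∈ R, β - pairCo β α • α ∈ R)
    (u : E ≃ₗ[ℝ] E) (hu : u ∈ WeylGrp R) :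
    (∀ x y, ⟪u x, u y⟫ = ⟪x, y⟫) ∧ (∀ β ∈ R, u β ∈ R) ∧ (∀ β ∈ R, u.symm β ∈ R) := by
  unfold WeylGrp at hu
  induction hu using Subgroup.closure_induction with
  | mem w hw =>
    obtain ⟨α, hα, hw⟩ := hw
    have hne : ⟪α, α⟫ ≠ 0 := by
      intro h
      rw [inner_self_eq_zero] at h
      exact hR0 (h ▸ hα)
    have hinv : ∀ x, w (w x) = x := by
      intro x
      rw [hw (w x), hw x]
      have : pairCo (x - pairCo x α • α) α = - pairCo x α := by
        unfold pairCo
        rw [inner_sub_left, real_inner_smul_left]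
        field_simp
        ring
      rw [this]
      simp
    have hsymm : ∀ x, w.symm x = w x := by
      intro x
      rw [LinearEquiv.symm_apply_eq, hinv]
    refine ⟨?_, ?_, ?_⟩
    · intro x y
      rw [hw, hw]
      unfold pairCo
      simp only [inner_sub_left, inner_sub_right, real_inner_smul_left, real_inner_smul_right]
      rw [real_inner_comm y α]
      field_simp
      ring
    · intro β hβ
      rw [hw]
      exact hRrefl α hα β hβ
    · intro β hβ
      rw [hsymm, hw]
      exact hRrefl α hα β hβ
  | one => exact ⟨fun x y => rfl, fun β h => h, fun β h => h⟩
  | mul v w _ _ hv hw =>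
    refine ⟨fun x y => ?_, fun β h => hv.2.1 _ (hw.2.1 _ h), fun β h => ?_⟩
    · exact (hv.1 _ _).trans (hw.1 x y)
    · exact hw.2.2 _ (hv.2.2 _ h)
  | inv v _ hv =>
    refine ⟨fun x y => ?_, fun β h => hv.2.2 _ h, fun β h => hv.2.1 _ h⟩
    have := hv.1 (v.symm x) (v.symm y)
    simp only [LinearEquiv.apply_symm_apply] at this
    exact this.symm

theorem affNeg_iff (R Rp : Set E) (β : E) (hpos : 0 < ⟪β, β⟫) (hβ : -β ∈ R) (m : ℤ) :
    (β, ⟪β, β⟫ / 2 * (m : ℝ)) ∈ AffNeg R Rp ↔ (-β ∈ Rp ∧ m = 0) ∨ m < 0 := by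
  unfold AffNeg AffPos
  simp only [Set.mem_setOf_eq, Prod.neg_mk, Prod.mk.injEq]
  constructor
  · rintro (⟨α, hα, rfl, h⟩ | ⟨α, hα, j, hj, rfl, h⟩)
    · left
      refine ⟨hα, ?_⟩
      have : (m : ℝ) = 0 := by
        have h2 : ⟪β, β⟫ / 2 * (m : ℝ) = 0 := by linarith
        rcases mul_eq_zero.1 h2 with h3 | h3
        · linarith
        · exact h3
      exact_mod_cast this
    · right
      rw [inner_neg_neg] at h
      have h2 : ⟪β, β⟫ / 2 * ((m : ℝ) + j) = 0 := by linarith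
      have h4 : (m : ℝ) + j = 0 := by
        rcases mul_eq_zero.1 h2 with h3 | h3
        · linarith
        · exact h3
      have h5 : m + j = 0 := by exact_mod_cast h4
      omega
  · rintro (⟨h, rfl⟩ | h)
    · left
      exact ⟨-β, h, rfl, by simp⟩
    · right
      refine ⟨-β, hβ, -m, by omega, rfl, ?_⟩
      rw [inner_neg_neg]
      push_cast
      ring

/-- for `b ∈ P`, `u_b ∈ W` the unique element with
`λ(π_b) ∩ R = ∅` for `π_b = b·u_b⁻¹`, and `b₋ = u_b(b) ∈ P₋`:
`λ(π_b) = {[α, ν_α j] : α ∈ R₋, (u_b⁻¹(α) ∈ R₊ and 0 < j < ⟨b₋,α^∨⟩) or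
(u_b⁻¹(α) ∈ R₋ and 0 < j ≤ ⟨b₋,α^∨⟩)}`. -/
theorem stmt17
    [FiniteDimensional ℝ E] (hdim : 1 ≤ Module.finrank ℝ E)
    (R : Set E) (hRfin : R.Finite) (hR0 : (0 : E) ∉ R)
    (hRspan : Submodule.span ℝ R = ⊤)
    (hRrefl : ∀ α ∈ R, ∀ β ∈ R, β - pairCo β α • α ∈ R)
    (hRcrys : ∀ α ∈ R, ∀ β ∈ R, ∃ z : ℤ, pairCo β α = z)
    (hRred : ∀ α ∈ R, ∀ c : ℝ, c • α ∈ R → c = 1 ∨ c = -1)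
    (hRirr : ¬∃ R1 R2 : Set E, R1.Nonempty ∧ R2.Nonempty ∧ R1 ∪ R2 = R ∧
        ∀ α ∈ R1, ∀ β ∈ R2, ⟪α, β⟫ = 0)
    (hnorm1 : ∀ α ∈ R, 2 ≤ ⟪α, α⟫) (hnorm2 : ∃ α ∈ R, ⟪α, α⟫ = 2)
    (Rp : Set E) (hRpsub : Rp ⊆ R)
    (hRppart : ∀ α ∈ R, (α ∈ Rp ∨ -α ∈ Rp) ∧ ¬(α ∈ Rp ∧ -α ∈ Rp))
    (hRpadd : ∀ α ∈ Rp, ∀ β ∈ Rp, α + β ∈ R → α + β ∈ Rp)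
    :
    ∀ b ∈ wtLat R, ∀ u : E ≃ₗ[ℝ] E, u ∈ WeylGrp R →
      (∀ α ∈ R, (α, (0 : ℝ)) ∉ lamSet R Rp (piMap b u)) →
      lamSet R Rp (piMap b u) =
        {x : E × ℝ | ∃ α : E, -α ∈ Rp ∧ ∃ j : ℤ, x = (α, ⟪α, α⟫ / 2 * j) ∧ 0 < j ∧
          ((u.symm α ∈ Rp ∧ (j : ℝ) < pairCo (u b) α) ∨
            (-(u.symm α) ∈ Rp ∧ (j : ℝ) ≤ pairCo (u b) α))} := by
  intro b hb u hu hlam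
  obtain ⟨hin, huR, husR⟩ := weyl_pres R hR0 hRrefl u hu
  have hpos : ∀ α ∈ R, 0 < ⟪α, α⟫ := fun α hα => by linarith [hnorm1 α hα]
  have hneg : ∀ α ∈ R, -α ∈ R := by
    intro α hα
    have h := hRrefl α hα α hα
    have h2 : pairCo α α = 2 := by
      unfold pairCo
      have := (hpos α hα).ne'
      field_simp
    rw [h2] at h
    have h3 : α - (2 : ℝ) • α = -α := by
      rw [two_smul]; abel
    rwa [h3] at h
  have hins : ∀ α : E, ⟪u.symm α, u.symm α⟫ = ⟪α, α⟫ := by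
    intro α
    have := hin (u.symm α) (u.symm α)
    simpa using this.symm
  have key : ∀ α ∈ R, ∃ k : ℤ, pairCo (u b) α = k ∧ ∀ j : ℤ,
      (piMap b u (α, ⟪α, α⟫ / 2 * (j : ℝ)) ∈ AffNeg R Rp ↔
        (-(u.symm α) ∈ Rp ∧ j = k) ∨ j < k) := by
    intro α hα
    obtain ⟨k, hk⟩ := hb _ (husR α hα)
    have hbi : ⟪u b, α⟫ = ⟪b, u.symm α⟫ := by
      have := hin b (u.symm α)
      simpa using this
    have hk2 : pairCo (u b) α = k := by
      rw [← hk]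
      unfold pairCo
      rw [hbi, hins]
    refine ⟨k, hk2, fun j => ?_⟩
    have hp := hpos α hα
    have e : piMap b u (α, ⟪α, α⟫ / 2 * (j : ℝ)) =
        (u.symm α, ⟪u.symm α, u.symm α⟫ / 2 * ((j - k : ℤ) : ℝ)) := by
      unfold piMap
      simp only [Prod.mk.injEq, true_and]
      rw [hins]
      push_cast
      rw [← hk, real_inner_comm b (u.symm α)]
      unfold pairCo
      rw [hins]
      field_simp
    rw [e, affNeg_iff R Rp _ (hpos _ (husR α hα)) (hneg _ (husR α hα))]
    constructor
    · rintro (⟨h, h2⟩ | h)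
      · exact Or.inl ⟨h, by omega⟩
      · exact Or.inr (by omega)
    · rintro (⟨h, h2⟩ | h)
      · exact Or.inl ⟨h, by omega⟩
      · exact Or.inr (by omega)
  ext x
  constructor
  · rintro ⟨hx, hF⟩
    rcases hx with ⟨α, hα, rfl⟩ | ⟨α, hα, j, hj, rfl⟩
    · exact absurd ⟨Or.inl ⟨α, hα, rfl⟩, hF⟩ (hlam α (hRpsub hα))
    · obtain ⟨k, hk, hkey⟩ := key α hα
      have hF' := (hkey j).1 hF
      refine ⟨α, ?_, j, rfl, hj, ?_⟩
      · rcases (hRppart α hα).1 with h | h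
        · exfalso
          apply hlam α hα
          refine ⟨Or.inl ⟨α, h, rfl⟩, ?_⟩
          have h0 := (hkey 0).2 (Or.inr (by omega))
          simpa using h0
        · exact h
      · rw [hk]
        rcases hF' with ⟨h, h2⟩ | h
        · right
          exact ⟨h, by rw [h2]⟩
        · rcases (hRppart _ (husR α hα)).1 with h3 | h3
          · exact Or.inl ⟨h3, by exact_mod_cast h⟩
          · exact Or.inr ⟨h3, by exact_mod_cast h.le⟩
  · rintro ⟨α, hα, j, rfl, hj, h⟩
    have hαR : α ∈ R := by simpa using hneg _ (hRpsub hα)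
    obtain ⟨k, hk, hkey⟩ := key α hαR
    rw [hk] at h
    refine ⟨Or.inr ⟨α, hαR, j, hj, rfl⟩, (hkey j).2 ?_⟩
    rcases h with ⟨h1, h2⟩ | ⟨h1, h2⟩
    · right
      exact_mod_cast h2
    · have h3 : j ≤ k := by exact_mod_cast h2
      rcases h3.lt_or_eq with h4 | h4
      · exact Or.inr h4
      · exact Or.inl ⟨h1, h4⟩
end
end
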